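/- Let {q_n : n≥0} be a sequence of non-negative reals with q_0>0, and let n∈ℕ, 1 ≤ s < m_n and sM_n < r ≤ (s+1)M_n. Then the Nörlund kernel satisfies the identity Q_r F_r = Q_r D_{sM_n} − ψ_{sM_n−1} · Σ_{l=1}^{sM_n−2} (q_{r−sM_n+l} − q_{r−sM_n+l+1}) · l · conj(K_l) − ψ_{sM_n−1} · (sM_n−1) · q_{r−1} · conj(K_{sM_n−1}) + ψ_{sM_n} · Q_{r−sM_n} F_{r−sM_n}, pointwise on G_m (here conj denotes complex conjugation). -/

import Mathlib

open MeasureTheory Filter Finset Asymptotics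
open scoped ENNReal NNReal

noncomputable section

namespace Vilenkin

/-- The Vilenkin group `G_m`: the complete direct product of the cyclic groups `Z_{m_n}`. -/
abbrev G (m : ℕ → ℕ) := ∀ n, ZMod (m n)

/-- The generalized number system `M_0 = 1`, `M_{n+1} = m_n M_n`. -/
def MM (m : ℕ → ℕ) : ℕ → ℕ
  | 0 => 1
  | n + 1 => m n * MM m n

/-- The generalized Rademacher functions `r_k(x) = exp(2 π i x_k / m_k)`. -/
def rade (m : ℕ → ℕ) (k : ℕ) (x : G m) : ℂ :=
  Complex.exp (2 * Real.pi * Complex.I * ((x k).val : ℂ) / (m k : ℂ))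

/-- The Vilenkin system `ψ_n = ∏_k r_k^{n_k}`, where `n = ∑_k n_k M_k` is the expansion of `n`
in the generalized number system (the digits `n_k = (n / M_k) mod m_k` vanish for `k > n`). -/
def psi (m : ℕ → ℕ) (n : ℕ) (x : G m) : ℂ :=
  ∏ k ∈ Finset.range (n + 1), rade m k x ^ (n / MM m k % m k)

/-- The Dirichlet kernels `D_n = ∑_{k=0}^{n-1} ψ_k`. -/
def D (m : ℕ → ℕ) (n : ℕ) (x : G m) : ℂ := ∑ k ∈ Finset.range n, psi m k x

/-- The Fejér kernels `K_n = (1/n) ∑_{k=1}^{n} D_k`. -/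
def K (m : ℕ → ℕ) (n : ℕ) (x : G m) : ℂ := (n : ℂ)⁻¹ * ∑ k ∈ Finset.Icc 1 n, D m k x

/-- `Q_n = ∑_{k=0}^{n-1} q_k`. -/
def Q (q : ℕ → ℝ) (n : ℕ) : ℝ := ∑ k ∈ Finset.range n, q k

/-- The Nörlund kernels `F_n = (1/Q_n) ∑_{k=1}^{n} q_{n-k} D_k`. -/
def F (m : ℕ → ℕ) (q : ℕ → ℝ) (n : ℕ) (x : G m) : ℂ :=
  ((Q q n : ℝ) : ℂ)⁻¹ * ∑ k ∈ Finset.Icc 1 n, (q (n - k) : ℂ) * D m k x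

/-- The interval (cylinder) `I_n(x) = {y : y_j = x_j for all j < n}`. -/
def cyl (m : ℕ → ℕ) (n : ℕ) (x : G m) : Set (G m) := {y | ∀ j < n, y j = x j}

/-- The element `s_k e_k` of `G_m` (value `s_k` in coordinate `k`, zero elsewhere). -/
def oneSpike (m : ℕ → ℕ) (k sk : ℕ) : G m := fun j => if j = k then (sk : ZMod (m j)) else 0

/-- The element `s_k e_k + s_l e_l` of `G_m` (for `k ≠ l`). -/
def twoSpike (m : ℕ → ℕ) (k sk l sl : ℕ) : G m :=
  fun j => if j = k then (sk : ZMod (m j)) else if j = l then (sl : ZMod (m j)) else 0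

/-- The σ-algebra `𝔉_n` generated by the intervals `I_n(x)`, i.e. by the first `n`
coordinates. -/
def filt (m : ℕ → ℕ) (n : ℕ) : MeasurableSpace (G m) :=
  MeasurableSpace.comap (fun x (i : Fin n) => x i.val) inferInstance

/-- `f = (f^{(n)})` is a martingale with respect to the filtration `(𝔉_n)` and the measure `μ`. -/
def IsMartingale (m : ℕ → ℕ) (μ : Measure (G m)) (f : ℕ → G m → ℂ) : Prop :=
  (∀ n, Integrable (f n) μ) ∧ (∀ n, Measurable[filt m n] (f n)) ∧
    ∀ n, ∀ s : Set (G m), MeasurableSet[filt m n] s →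
      ∫ x in s, f (n + 1) x ∂μ = ∫ x in s, f n x ∂μ

/-- The `L_p`-quasinorm `(∫ g^p dμ)^{1/p}` of a nonnegative (extended-real-valued) function. -/
def lpNormE (m : ℕ → ℕ) (μ : Measure (G m)) (p : ℝ) (g : G m → ℝ≥0∞) : ℝ≥0∞ :=
  (∫⁻ x, g x ^ p ∂μ) ^ (1 / p)

/-- The martingale Hardy space quasinorm `‖f‖_{H_p} = ‖sup_n |f^{(n)}|‖_p`. -/
def HpNorm (m : ℕ → ℕ) (μ : Measure (G m)) (p : ℝ) (f : ℕ → G m → ℂ) : ℝ≥0∞ :=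
  lpNormE m μ p (fun x => ⨆ n, (‖f n x‖₊ : ℝ≥0∞))

/-- The Vilenkin-Fourier coefficients of a martingale:
`f̂(i) = lim_k ∫ f^{(k)} conj ψ_i dμ`. -/
def mcoef (m : ℕ → ℕ) (μ : Measure (G m)) (f : ℕ → G m → ℂ) (i : ℕ) : ℂ :=
  limUnder atTop fun k => ∫ x, f k x * (starRingEnd ℂ) (psi m i x) ∂μ

/-- The partial sums `S_n f = ∑_{k=0}^{n-1} f̂(k) ψ_k` of the Vilenkin-Fourier series of a
martingale. -/
def mS (m : ℕ → ℕ) (μ : Measure (G m)) (f : ℕ → G m → ℂ) (n : ℕ) (x : G m) : ℂ :=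
  ∑ k ∈ Finset.range n, mcoef m μ f k * psi m k x

/-- The Nörlund means `t_n f = (1/Q_n) ∑_{k=1}^{n} q_{n-k} S_k f` of a martingale. -/
def mT (m : ℕ → ℕ) (q : ℕ → ℝ) (μ : Measure (G m)) (f : ℕ → G m → ℂ) (n : ℕ) (x : G m) : ℂ :=
  ((Q q n : ℝ) : ℂ)⁻¹ * ∑ k ∈ Finset.Icc 1 n, (q (n - k) : ℂ) * mS m μ f k x

/-- The Cesàro numbers `A_0^α = 0`, `A_n^α = (α+1)⋯(α+n)/n!`. -/
def AC (α : ℝ) (n : ℕ) : ℝ :=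
  if n = 0 then 0 else (∏ j ∈ Finset.Icc 1 n, (α + (j : ℝ))) / (n.factorial : ℝ)

/-- The `(C,α)` (Cesàro) means `σ_n^α f = (1/A_n^α) ∑_{k=1}^{n} A_{n-k}^{α-1} S_k f` of a
martingale. -/
def mCes (m : ℕ → ℕ) (α : ℝ) (μ : Measure (G m)) (f : ℕ → G m → ℂ) (n : ℕ) (x : G m) : ℂ :=
  ((AC α n : ℝ) : ℂ)⁻¹ * ∑ k ∈ Finset.Icc 1 n, ((AC (α - 1) (n - k) : ℝ) : ℂ) * mS m μ f k x

/-- The Fejér means `σ_n f = (1/n) ∑_{k=1}^{n} S_k f` of a martingale. -/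
def mFej (m : ℕ → ℕ) (μ : Measure (G m)) (f : ℕ → G m → ℂ) (n : ℕ) (x : G m) : ℂ :=
  (n : ℂ)⁻¹ * ∑ k ∈ Finset.Icc 1 n, mS m μ f k x

/-- The Vilenkin-Fourier coefficients of an integrable function. -/
def fcoef (m : ℕ → ℕ) (μ : Measure (G m)) (g : G m → ℂ) (i : ℕ) : ℂ :=
  ∫ x, g x * (starRingEnd ℂ) (psi m i x) ∂μ

/-- The partial sums of the Vilenkin-Fourier series of an integrable function. -/
def fS (m : ℕ → ℕ) (μ : Measure (G m)) (g : G m → ℂ) (n : ℕ) (x : G m) : ℂ :=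
  ∑ k ∈ Finset.range n, fcoef m μ g k * psi m k x

/-- The Nörlund means of an integrable function. -/
def fT (m : ℕ → ℕ) (q : ℕ → ℝ) (μ : Measure (G m)) (g : G m → ℂ) (n : ℕ) (x : G m) : ℂ :=
  ((Q q n : ℝ) : ℂ)⁻¹ * ∑ k ∈ Finset.Icc 1 n, (q (n - k) : ℂ) * fS m μ g k x


theorem MM_pos (m : ℕ → ℕ) (hm : ∀ n, 2 ≤ m n) (k : ℕ) : 0 < MM m k := by
  induction k with
  | zero => simp [MM]
  | succ k ih => simp only [MM]; exact Nat.mul_pos (by have := hm k; omega) ih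

theorem lt_MM (m : ℕ → ℕ) (hm : ∀ n, 2 ≤ m n) (k : ℕ) : k < MM m k := by
  induction k with
  | zero => simp [MM]
  | succ k ih => simp only [MM]; nlinarith [hm k]

theorem MM_add (m : ℕ → ℕ) (k d : ℕ) : ∃ c, MM m (k + d) = MM m k * c := by
  induction d with
  | zero => exact ⟨1, by simp⟩
  | succ d ih =>
    obtain ⟨c, hc⟩ := ih
    refine ⟨m (k + d) * c, ?_⟩
    rw [← Nat.add_assoc]
    simp only [MM]
    rw [hc]; ring

theorem MM_lt (m : ℕ → ℕ) {k n : ℕ} (h : k < n) : ∃ c, MM m n = MM m k * (m k * c) := by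
  obtain ⟨d, rfl⟩ := Nat.exists_eq_add_of_le (Nat.succ_le_of_lt h)
  obtain ⟨c, hc⟩ := MM_add m (k + 1) d
  refine ⟨c, ?_⟩
  rw [Nat.succ_eq_add_one, hc]
  simp only [MM]; ring

theorem psi_ext (m : ℕ → ℕ) (hm : ∀ n, 2 ≤ m n) (a T : ℕ) (hT : a + 1 ≤ T) (x : G m) :
    psi m a x = ∏ k ∈ Finset.range T, rade m k x ^ (a / MM m k % m k) := by
  unfold psi
  apply Finset.prod_subset
  · intro k hk; simp only [Finset.mem_range] at *; omega
  · intro k _ hk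
    simp only [Finset.mem_range] at hk
    have := lt_MM m hm k
    rw [Nat.div_eq_of_lt (by omega)]
    simp

theorem psi_add (m : ℕ → ℕ) (hm : ∀ n, 2 ≤ m n) (a b : ℕ) (x : G m)
    (h : ∀ k, (a + b) / MM m k % m k = a / MM m k % m k + b / MM m k % m k) :
    psi m (a + b) x = psi m a x * psi m b x := by
  rw [psi_ext m hm a (a + b + 1) (by omega), psi_ext m hm b (a + b + 1) (by omega),
    psi_ext m hm (a + b) (a + b + 1) (by omega), ← Finset.prod_mul_distrib]
  refine Finset.prod_congr rfl fun k _ => ?_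
  rw [h k, pow_add]

theorem conj_rade (m : ℕ → ℕ) (k : ℕ) (x : G m) :
    rade m k x * (starRingEnd ℂ) (rade m k x) = 1 := by
  unfold rade
  rw [← Complex.exp_conj, ← Complex.exp_add]
  simp only [map_div₀, map_mul, Complex.conj_ofReal, Complex.conj_I, map_natCast, map_ofNat]
  rw [Complex.exp_eq_one_iff]
  exact ⟨0, by push_cast; ring⟩

theorem conj_psi (m : ℕ → ℕ) (k : ℕ) (x : G m) :
    psi m k x * (starRingEnd ℂ) (psi m k x) = 1 := by
  unfold psi
  rw [map_prod, ← Finset.prod_mul_distrib]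
  refine Finset.prod_eq_one fun k _ => ?_
  rw [map_pow, ← mul_pow, conj_rade, one_pow]

theorem psi_shift (m : ℕ → ℕ) (hm : ∀ n, 2 ≤ m n) (n s b : ℕ) (hb : b < MM m n) (x : G m) :
    psi m (s * MM m n + b) x = psi m (s * MM m n) x * psi m b x := by
  apply psi_add m hm
  intro k
  have hk := MM_pos m hm k
  rcases lt_or_ge k n with h | h
  · obtain ⟨c, hc⟩ := MM_lt m h
    have e : s * MM m n = MM m k * (m k * (s * c)) := by rw [hc]; ring
    rw [e, Nat.mul_add_div hk, Nat.mul_add_mod, Nat.mul_div_cancel_left _ hk, Nat.mul_mod_right]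
    simp
  · obtain ⟨d, rfl⟩ := Nat.exists_eq_add_of_le h
    obtain ⟨c, hc⟩ := MM_add m n d
    have hn := MM_pos m hm n
    have hle : MM m n ≤ MM m (n + d) := by
      rw [hc]; apply Nat.le_mul_of_pos_right
      rcases Nat.eq_zero_or_pos c with h0 | h0
      · rw [hc, h0] at hk; simp at hk
      · exact h0
    rw [Nat.div_eq_of_lt (hb.trans_le hle), hc, ← Nat.div_div_eq_div_mul,
      ← Nat.div_div_eq_div_mul, Nat.mul_div_cancel _ hn, mul_comm s, Nat.mul_add_div hn,
      Nat.div_eq_of_lt hb]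
    simp

theorem digit_aux (M c t : ℕ) (ht : t < M * c) :
    (M * c - (t + 1)) % M = M - (t % M + 1) := by
  have hM : 0 < M := by
    rcases Nat.eq_zero_or_pos M with h | h
    · simp [h] at ht
    · exact h
  have hv := Nat.mod_lt t hM
  have hu : t / M < c := Nat.div_lt_of_lt_mul ht
  obtain ⟨w, hw⟩ := Nat.exists_eq_add_of_lt hu
  have e := Nat.div_add_mod t M
  have : M * c - (t + 1) = M * w + (M - (t % M + 1)) := by
    have h2 : M * c = M * (t / M) + M * w + M := by
      conv_lhs => rw [hw]
      ring
    omega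
  rw [this, Nat.mul_add_mod, Nat.mod_eq_of_lt (by omega)]

theorem psi_refl (m : ℕ → ℕ) (hm : ∀ n, 2 ≤ m n) (n s i : ℕ) (hs : s < m n)
    (hi : i < s * MM m n) (x : G m) :
    psi m (s * MM m n - 1 - i) x
      = psi m (s * MM m n - 1) x * (starRingEnd ℂ) (psi m i x) := by
  have key : psi m ((s * MM m n - 1 - i) + i) x
      = psi m (s * MM m n - 1 - i) x * psi m i x := by
    apply psi_add m hm
    intro k
    have e1 : s * MM m n - 1 - i + i = s * MM m n - (0 + 1) := by omega
    have e2 : s * MM m n - 1 - i = s * MM m n - (i + 1) := by omega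
    rw [e1, e2]
    have hk := MM_pos m hm k
    have hmk := hm k
    rcases lt_trichotomy k n with h | h | h
    · obtain ⟨c, hc⟩ := MM_lt m h
      have e : s * MM m n = MM m k * (m k * (s * c)) := by rw [hc]; ring
      rw [e] at hi ⊢
      have ht : i / MM m k < m k * (s * c) := Nat.div_lt_of_lt_mul hi
      rw [Nat.mul_sub_div _ _ _ hi, Nat.mul_sub_div _ _ _ (by omega), Nat.zero_div,
        digit_aux _ _ _ ht, digit_aux _ _ _ (Nat.zero_lt_of_lt ht)]
      have := Nat.mod_lt (i / MM m k) (show 0 < m k by omega)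
      simp only [Nat.zero_mod]
      omega
    · subst h
      rw [mul_comm s] at hi ⊢
      have ht : i / MM m k < s := Nat.div_lt_of_lt_mul hi
      rw [Nat.mul_sub_div _ _ _ hi, Nat.mul_sub_div _ _ _ (by omega), Nat.zero_div]
      clear e1 e2
      generalize i / MM m k = u at *
      rw [Nat.mod_eq_of_lt (by omega), Nat.mod_eq_of_lt (by omega), Nat.mod_eq_of_lt (by omega)]
      omega
    · obtain ⟨d, rfl⟩ := Nat.exists_eq_add_of_le (Nat.succ_le_of_lt h)
      obtain ⟨c, hc⟩ := MM_add m (n + 1) d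
      have hlt : s * MM m n < MM m (n + 1 + d) := by
        have h0 : 0 < c := by
          rcases Nat.eq_zero_or_pos c with h0 | h0
          · have h3 := MM_pos m hm (n + 1 + d)
            rw [hc, h0] at h3; simp at h3
          · exact h0
        rw [hc]
        calc s * MM m n < m n * MM m n := Nat.mul_lt_mul_of_pos_right hs (MM_pos m hm n)
          _ = MM m (n + 1) := rfl
          _ ≤ _ := Nat.le_mul_of_pos_right _ h0
      rw [Nat.succ_eq_add_one, Nat.div_eq_of_lt (by omega), Nat.div_eq_of_lt (by omega),
        Nat.div_eq_of_lt (by omega)]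
      simp
  rw [Nat.sub_add_cancel (by omega)] at key
  rw [key, mul_assoc, conj_psi, mul_one]

theorem D_shift (m : ℕ → ℕ) (hm : ∀ n, 2 ≤ m n) (n s j : ℕ) (hj : j ≤ MM m n) (x : G m) :
    D m (s * MM m n + j) x = D m (s * MM m n) x + psi m (s * MM m n) x * D m j x := by
  unfold D
  rw [Finset.sum_range_add, Finset.mul_sum]
  congr 1
  refine Finset.sum_congr rfl fun k hk => ?_
  exact psi_shift m hm n s k (by have := Finset.mem_range.1 hk; omega) x

theorem D_refl (m : ℕ → ℕ) (hm : ∀ n, 2 ≤ m n) (n s j : ℕ) (hs : s < m n)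
    (hj : j ≤ s * MM m n) (x : G m) :
    D m (s * MM m n - j) x
      = D m (s * MM m n) x - psi m (s * MM m n - 1) x * (starRingEnd ℂ) (D m j x) := by
  induction j with
  | zero => simp [D]
  | succ j ih =>
    have h1 := ih (by omega)
    have e : s * MM m n - j = (s * MM m n - (j + 1)) + 1 := by omega
    have h2 : D m (s * MM m n - j) x
        = D m (s * MM m n - (j + 1)) x + psi m (s * MM m n - 1 - j) x := by
      rw [e]; unfold D
      rw [Finset.sum_range_succ]
      congr 2; omega
    have h3 : D m (j + 1) x = D m j x + psi m j x := by
      unfold D; rw [Finset.sum_range_succ]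
    rw [psi_refl m hm n s j hs (by omega)] at h2
    rw [h3, map_add]
    linear_combination h1 - h2

theorem Q_pos (q : ℕ → ℝ) (hq0 : 0 < q 0) (hqnn : ∀ n, 0 ≤ q n) (r : ℕ) (hr : 0 < r) :
    0 < Q q r := by
  unfold Q
  exact Finset.sum_pos' (fun i _ => hqnn i) ⟨0, by simpa using hr, hq0⟩

theorem QF (m : ℕ → ℕ) (q : ℕ → ℝ) (hq0 : 0 < q 0) (hqnn : ∀ n, 0 ≤ q n) (r : ℕ) (hr : 0 < r)
    (x : G m) :
    (Q q r : ℂ) * F m q r x = ∑ k ∈ Finset.range r, (q k : ℂ) * D m (r - k) x := by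
  have := (Q_pos q hq0 hqnn r hr).ne'
  unfold F
  rw [mul_inv_cancel_left₀ (by exact_mod_cast this)]
  refine Finset.sum_bij' (fun k _ => r - k) (fun k _ => r - k) ?_ ?_ ?_ ?_ ?_
  · intro k hk; simp only [Finset.mem_Icc, Finset.mem_range] at *; omega
  · intro k hk; simp only [Finset.mem_Icc, Finset.mem_range] at *; omega
  · intro k hk; simp only [Finset.mem_Icc] at *; omega
  · intro k hk; simp only [Finset.mem_range] at *; omega
  · intro k hk; simp only [Finset.mem_Icc] at *
    rw [Nat.sub_sub_self hk.2]

theorem lK_succ (m : ℕ → ℕ) (l : ℕ) (x : G m) :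
    ((l + 1 : ℕ) : ℂ) * K m (l + 1) x = (l : ℂ) * K m l x + D m (l + 1) x := by
  have h : ∀ l : ℕ, (l : ℂ) * K m l x = ∑ k ∈ Finset.Icc 1 l, D m k x := by
    intro l
    unfold K
    rcases Nat.eq_zero_or_pos l with h | h
    · simp [h]
    · rw [mul_inv_cancel_left₀ (by exact_mod_cast h.ne')]
  rw [h, h, Finset.sum_Icc_succ_top (by omega)]

theorem abel (m : ℕ → ℕ) (q : ℕ → ℝ) (t N : ℕ) (x : G m) :
    ∑ j ∈ Finset.range (N + 1), (q (t + j) : ℂ) * (starRingEnd ℂ) (D m j x)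
      = ∑ l ∈ Finset.Icc 1 (N - 1),
          ((q (t + l) - q (t + l + 1) : ℝ) : ℂ) * (l : ℂ) * (starRingEnd ℂ) (K m l x)
        + (N : ℂ) * (q (t + N) : ℂ) * (starRingEnd ℂ) (K m N x) := by
  induction N with
  | zero => simp [D]
  | succ N ih =>
    rw [Finset.sum_range_succ, ih]
    have h := congrArg (starRingEnd ℂ) (lK_succ m N x)
    simp only [map_add, map_mul, map_natCast] at h
    rcases N with _ | N
    · simp only [Nat.cast_zero, zero_mul, zero_add] at h ⊢
      simp
      simp at h
      exact Or.inl h.symm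
    · simp only [Nat.add_sub_cancel]
      rw [Finset.sum_Icc_succ_top (by omega)]
      simp only [Complex.ofReal_sub, ← Nat.add_assoc] at h ⊢
      linear_combination (-(q (t + N + 1 + 1) : ℂ)) * h

/-- Let `{q_n}` be non-negative reals with `q_0 > 0`, let `1 ≤ s < m_n` and
`s M_n < r ≤ (s+1) M_n`. Then the Nörlund kernel satisfies
`Q_r F_r = Q_r D_{sM_n} - ψ_{sM_n-1} ∑_{l=1}^{sM_n-2} (q_{r-sM_n+l} - q_{r-sM_n+l+1}) l conj(K_l)
 - ψ_{sM_n-1} (sM_n-1) q_{r-1} conj(K_{sM_n-1}) + ψ_{sM_n} Q_{r-sM_n} F_{r-sM_n}`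
pointwise on `G_m`. -/
theorem statement6
    (m : ℕ → ℕ) (hm : ∀ n, 2 ≤ m n) (hmb : ∃ B, ∀ n, m n ≤ B)
    (q : ℕ → ℝ) (hq0 : 0 < q 0) (hqnn : ∀ n, 0 ≤ q n)
    (n s r : ℕ) (hs1 : 1 ≤ s) (hs2 : s < m n)
    (hr1 : s * MM m n < r) (hr2 : r ≤ (s + 1) * MM m n) (x : G m) :
    (Q q r : ℂ) * F m q r x =
      (Q q r : ℂ) * D m (s * MM m n) x
        - psi m (s * MM m n - 1) x *
            ∑ l ∈ Finset.Icc 1 (s * MM m n - 2),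
              ((q (r - s * MM m n + l) - q (r - s * MM m n + l + 1) : ℝ) : ℂ) * (l : ℂ) *
                (starRingEnd ℂ) (K m l x)
        - psi m (s * MM m n - 1) x * ((s * MM m n - 1 : ℕ) : ℂ) * (q (r - 1) : ℂ) *
            (starRingEnd ℂ) (K m (s * MM m n - 1) x)
        + psi m (s * MM m n) x * (Q q (r - s * MM m n) : ℂ) * F m q (r - s * MM m n) x := by
  have hN : 0 < s * MM m n := Nat.mul_pos hs1 (MM_pos m hm n)
  have hle : r ≤ s * MM m n + MM m n := by rw [Nat.add_mul, one_mul] at hr2; exact hr2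
  have hD := fun j (h : j ≤ s * MM m n) => D_refl m hm n s j hs2 h x
  have hS := fun j (h : j ≤ MM m n) => D_shift m hm n s j h x
  obtain ⟨t, rfl⟩ := Nat.exists_eq_add_of_lt hr1
  rw [mul_assoc (psi m (s * MM m n) x), QF m q hq0 hqnn _ (by omega), QF m q hq0 hqnn _ (by omega)]
  generalize s * MM m n = N at *
  obtain ⟨L, rfl⟩ : ∃ L, N = L + 1 := ⟨N - 1, by omega⟩
  rw [show L + 1 + t + 1 - (L + 1) = t + 1 by omega, show L + 1 - 2 = L - 1 by omega,
    show L + 1 + t + 1 - 1 = t + 1 + L by omega, show L + 1 + t + 1 = (t + 1) + (L + 1) by omega]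
  simp only [Nat.add_sub_cancel]
  have hA := abel m q (t + 1) L x
  have hQ : ((Q q (t + 1 + (L + 1)) : ℝ) : ℂ) = ∑ k ∈ Finset.range (t + 1), (q k : ℂ)
      + ∑ k ∈ Finset.range (L + 1), (q (t + 1 + k) : ℂ) := by
    unfold Q
    rw [Finset.sum_range_add]; push_cast; rfl
  have hB : ∑ k ∈ Finset.range (t + 1), (q k : ℂ) * D m (t + 1 + (L + 1) - k) x
      = (∑ k ∈ Finset.range (t + 1), (q k : ℂ)) * D m (L + 1) x
        + psi m (L + 1) x * ∑ k ∈ Finset.range (t + 1), (q k : ℂ) * D m (t + 1 - k) x := by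
    rw [Finset.sum_mul, Finset.mul_sum, ← Finset.sum_add_distrib]
    refine Finset.sum_congr rfl fun k hk => ?_
    have hk := Finset.mem_range.1 hk
    rw [show t + 1 + (L + 1) - k = L + 1 + (t + 1 - k) by omega, hS _ (by omega)]
    ring
  have hC : ∑ k ∈ Finset.range (L + 1),
        (q (t + 1 + k) : ℂ) * D m (t + 1 + (L + 1) - (t + 1 + k)) x
      = (∑ k ∈ Finset.range (L + 1), (q (t + 1 + k) : ℂ)) * D m (L + 1) x
        - psi m L x * ∑ k ∈ Finset.range (L + 1),
          (q (t + 1 + k) : ℂ) * (starRingEnd ℂ) (D m k x) := by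
    rw [Finset.sum_mul, Finset.mul_sum, ← Finset.sum_sub_distrib]
    refine Finset.sum_congr rfl fun k hk => ?_
    have hk := Finset.mem_range.1 hk
    rw [show t + 1 + (L + 1) - (t + 1 + k) = L + 1 - k by omega, hD _ (by omega)]
    simp only [Nat.add_sub_cancel]
    ring
  rw [Finset.sum_range_add, hB, hC, hQ, hA]
  ring
end Vilenkin
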